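/- arXiv:1207.2815 — 2 statements merged into one kernel-verified Lean document; each statement's English description precedes it below -/
import Mathlib

section
/- For every real w with 0 ≤ w ≤ 1/2, ∫₀^w [(₂F₁(1/4,3/4;1;t))² − 1]·(1−2t)/(t(1−t)) dt = (3/8)·w(1−w)·₅F₄(5/4,3/2,7/4,1,1; 2,2,2,2; 4w(1−w)). -/
/-!
Write `u = 4t(1-t)`. For `0 ≤ t < 1/2` the integrand is controlled by two classical identities.

* Quadratic transformation (`quadratic_transformation`):
  `₂F₁(1/4,3/4;1;t) = ₂F₁(1/8,3/8;1;u)`. Both sides solve the equation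
  `(t(1-t)y')' = (3/16) y`, so `t(1-t)` times their Wronskian is constant; it vanishes at `t = 0`,
  hence the quotient of the two solutions is constant, equal to its value `1` at `0`.
* Clausen's formula (`clausen_square`): `₂F₁(1/8,3/8;1;u)² = ₃F₂(1/4,1/2,3/4;1,1;u)`. With
  `θ = X d/dX`, the second order equation of the left-hand factor gives formally a third order
  equation for its square, whose coefficient recurrence is that of the `₃F₂` (`sq_coeff`).

If `c n` are the coefficients of the `₃F₂`, the integrand is therefore the derivative on `(0, w)` of
`Φ(u) = ∑ c (n+1) / (n+1) * u ^ (n+1)`. The bound `c n ≤ 1/(n+1)` makes `Φ` continuous up to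
`u = 1`, and the integrand is nonnegative, so the fundamental theorem of calculus applies on all of
`[0, 1/2]`. Comparing coefficients, `Φ(u)` is the right-hand side.
-/

open Real Finset

/-- Pochhammer symbol `(a)ₙ = a(a+1)⋯(a+n−1) = Γ(a+n)/Γ(a)`. -/
noncomputable def poch (a : ℝ) (n : ℕ) : ℝ := ∏ i ∈ Finset.range n, (a + i)

/-- The generalized hypergeometric function `₅F₄(5/4,3/2,7/4,1,1; 2,2,2,2; z)`. -/
noncomputable def F54 (z : ℝ) : ℝ :=
  ∑' n : ℕ, (poch (5/4) n * poch (3/2) n * poch (7/4) n * poch 1 n * poch 1 n) /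
      (poch 2 n * poch 2 n * poch 2 n * poch 2 n) * z ^ n / (n.factorial : ℝ)

/-- The Gauss hypergeometric function `₂F₁(1/4,3/4; 1; t)`. -/
noncomputable def F21 (t : ℝ) : ℝ :=
  ∑' n : ℕ, (poch (1/4) n * poch (3/4) n) / poch 1 n * t ^ n / (n.factorial : ℝ)

/-! ### Power series with polynomially bounded coefficients -/

/-- The sum of the real power series with coefficients `a`. -/
noncomputable def ps (a : ℕ → ℝ) (x : ℝ) : ℝ := ∑' n : ℕ, a n * x ^ n

/-- The operator `θ = x d/dx` on coefficient sequences. -/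
def th (a : ℕ → ℝ) (n : ℕ) : ℝ := n * a n

/-- At most polynomial growth, which gives convergence on `|x| < 1` and is preserved by `th`. -/
def PolyBdd (a : ℕ → ℝ) : Prop := ∃ (C : ℝ) (k : ℕ), ∀ n, |a n| ≤ C * ((n : ℝ) + 1) ^ k

lemma PolyBdd.th {a : ℕ → ℝ} (h : PolyBdd a) : PolyBdd (th a) := by
  obtain ⟨C, k, h⟩ := h
  refine ⟨C, k + 1, fun n => ?_⟩
  have h1 := h n
  have hC : 0 ≤ C * ((n : ℝ) + 1) ^ k := (abs_nonneg _).trans h1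
  have hn : (0 : ℝ) ≤ n := n.cast_nonneg
  rw [_root_.th, abs_mul, abs_of_nonneg hn, pow_succ, ← mul_assoc]
  nlinarith [mul_le_mul_of_nonneg_left h1 hn]

lemma PolyBdd.summable_abs {a : ℕ → ℝ} (h : PolyBdd a) {x : ℝ} (hx : |x| < 1) :
    Summable fun n => |a n * x ^ n| := by
  obtain ⟨C, k, h⟩ := h
  rcases eq_or_ne x 0 with rfl | hx0
  · refine summable_of_ne_finset_zero (s := {0}) fun n hn => ?_
    simp at hn
    simp [hn]
  have h1 := summable_pow_mul_geometric_of_norm_lt_one (R := ℝ) k (r := |x|) (by simpa using hx)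
  have h2 : Summable fun n : ℕ => ((n : ℝ) + 1) ^ k * |x| ^ n := by
    have := ((summable_nat_add_iff 1).2 h1).mul_right (|x|⁻¹)
    refine this.congr fun n => ?_
    have : |x| ≠ 0 := by simpa using hx0
    push_cast
    rw [pow_succ]
    field_simp
  refine Summable.of_nonneg_of_le (fun n => abs_nonneg _) (fun n => ?_) (h2.mul_left C)
  rw [abs_mul, abs_pow, ← mul_assoc]
  exact mul_le_mul_of_nonneg_right (h n) (by positivity)

lemma PolyBdd.summable {a : ℕ → ℝ} (h : PolyBdd a) {x : ℝ} (hx : |x| < 1) :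
    Summable fun n => a n * x ^ n := (h.summable_abs hx).of_abs

lemma ps_zero (a : ℕ → ℝ) : ps a 0 = a 0 := by
  rw [ps, tsum_eq_single 0]
  · simp
  · intro n hn
    simp [hn]

lemma PolyBdd.continuousOn {a : ℕ → ℝ} (h : PolyBdd a) {r : ℝ} (hr0 : 0 ≤ r) (hr : r < 1) :
    ContinuousOn (ps a) (Set.Icc 0 r) := by
  refine continuousOn_tsum (fun n => by fun_prop)
    (h.summable_abs (x := r) (by rwa [abs_of_nonneg hr0])) fun n x hx => ?_
  rw [Real.norm_eq_abs, abs_mul, abs_mul, abs_pow, abs_pow, abs_of_nonneg hx.1, abs_of_nonneg hr0]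
  exact mul_le_mul_of_nonneg_left (pow_le_pow_left₀ hx.1 hx.2 n) (abs_nonneg _)

lemma PolyBdd.hasDerivAt {a : ℕ → ℝ} (h : PolyBdd a) {x : ℝ} (hx0 : 0 < x) (hx : x < 1) :
    HasDerivAt (ps a) (ps (_root_.th a) x / x) x := by
  obtain ⟨r, hxr, hr⟩ := exists_between hx
  have hr0 : 0 < r := hx0.trans hxr
  have hs := (h.th.summable_abs (x := r) (by rwa [abs_of_pos hr0])).mul_right r⁻¹
  have key := hasDerivAt_tsum_of_isPreconnected (g := fun n y => a n * y ^ n)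
    (g' := fun n y => a n * (n * y ^ (n - 1))) hs (isOpen_Ioo (a := 0) (b := r))
    isPreconnected_Ioo (fun n y _ => (hasDerivAt_pow n y).const_mul (a n)) ?_
    (y₀ := x) ⟨hx0, hxr⟩ (h.summable (by rwa [abs_of_pos hx0])) (y := x) ⟨hx0, hxr⟩
  · refine key.congr_deriv ?_
    rw [ps, ← tsum_div_const]
    refine tsum_congr fun n => ?_
    rcases n with _ | n
    · simp [_root_.th]
    · simp only [_root_.th, Nat.add_sub_cancel, pow_succ]
      field_simp
  · intro n y hy
    rcases n with _ | n
    · simp [_root_.th]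
    · have hy0 : 0 < y := hy.1
      have : |_root_.th a (n + 1) * r ^ (n + 1)| * r⁻¹ = |a (n + 1)| * ((n + 1 : ℕ) * r ^ n) := by
        rw [_root_.th, abs_mul, abs_mul, abs_of_pos (pow_pos hr0 _), Nat.abs_cast, pow_succ]
        field_simp
      rw [this, Real.norm_eq_abs, abs_mul, abs_of_nonneg (a := _ * y ^ _) (by positivity),
        Nat.add_sub_cancel]
      gcongr
      exact hy.2.le

/-! ### The hypergeometric equation for `₂F₁(α, β; 1; x)` -/

/-- The coefficients `(α)ₙ (β)ₙ / n!²` of `₂F₁(α, β; 1; x)`. -/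
noncomputable def hc (α β : ℝ) (n : ℕ) : ℝ :=
  poch α n * poch β n / ((n.factorial : ℝ) * n.factorial)

lemma poch_zero (a : ℝ) : poch a 0 = 1 := by simp [poch]

lemma poch_succ (a : ℝ) (n : ℕ) : poch a (n + 1) = poch a n * (a + n) := by
  simp [poch, Finset.prod_range_succ]

lemma poch_one (n : ℕ) : poch 1 n = n.factorial := by
  induction n with
  | zero => simp [poch]
  | succ n ih => rw [poch_succ, ih, Nat.factorial_succ]; push_cast; ring

lemma hc_zero (α β : ℝ) : hc α β 0 = 1 := by simp [hc, poch_zero]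

lemma hc_succ (α β : ℝ) (n : ℕ) :
    ((n : ℝ) + 1) ^ 2 * hc α β (n + 1) = (α + n) * (β + n) * hc α β n := by
  have h : (n.factorial : ℝ) ≠ 0 := by positivity
  simp only [hc, poch_succ, Nat.factorial_succ]
  push_cast
  field_simp

lemma hc_mem {α β : ℝ} (hα : 0 ≤ α) (hα1 : α ≤ 1) (hβ : 0 ≤ β) (hβ1 : β ≤ 1) (n : ℕ) :
    0 ≤ hc α β n ∧ hc α β n ≤ 1 := by
  induction n with
  | zero => simp [hc_zero]
  | succ n ih =>
    have h := hc_succ α β n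
    have hn : (0 : ℝ) ≤ n := n.cast_nonneg
    have hp : (0 : ℝ) < ((n : ℝ) + 1) ^ 2 := by positivity
    have hq : 0 ≤ (α + n) * (β + n) := by positivity
    have hq1 : (α + n) * (β + n) ≤ ((n : ℝ) + 1) ^ 2 := by
      rw [sq]
      exact mul_le_mul (by linarith) (by linarith) (by positivity) (by positivity)
    rw [mul_comm, ← eq_div_iff hp.ne'] at h
    rw [h]
    refine ⟨div_nonneg (mul_nonneg hq ih.1) hp.le, (div_le_one hp).2 ?_⟩
    nlinarith [mul_le_mul_of_nonneg_left ih.2 hq]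

lemma hc_polyBdd {α β : ℝ} (hα : 0 ≤ α) (hα1 : α ≤ 1) (hβ : 0 ≤ β) (hβ1 : β ≤ 1) :
    PolyBdd (hc α β) := by
  refine ⟨1, 0, fun n => ?_⟩
  obtain ⟨h0, h1⟩ := hc_mem hα hα1 hβ hβ1 n
  simpa [abs_of_nonneg h0] using h1

/-- The hypergeometric equation `θ²y = x(θ + α)(θ + β)y`. -/
lemma hc_ode {α β : ℝ} (h : PolyBdd (hc α β)) {x : ℝ} (hx : |x| < 1) :
    (1 - x) * ps (th (th (hc α β))) x
      = x * ((α + β) * ps (th (hc α β)) x + α * β * ps (hc α β) x) := by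
  have s0 := h.summable hx
  have s1 := h.th.summable hx
  have s2 := h.th.th.summable hx
  have e : ps (th (th (hc α β))) x = x * (ps (th (th (hc α β))) x +
      ((α + β) * ps (th (hc α β)) x + α * β * ps (hc α β) x)) := by
    conv_lhs => rw [ps, s2.tsum_eq_zero_add]
    simp only [ps]
    rw [← tsum_mul_left, ← tsum_mul_left (a := α * β),
      ← (s1.mul_left _).tsum_add (s0.mul_left _),
      ← s2.tsum_add ((s1.mul_left _).add (s0.mul_left _)), ← tsum_mul_left]
    simp only [th, Nat.cast_zero, zero_mul, zero_add]
    refine tsum_congr fun n => ?_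
    have := hc_succ α β n
    push_cast
    rw [pow_succ]
    linear_combination x ^ n * x * this
  linear_combination e

/-! ### The quadratic transformation -/

lemma eq_of_hasDerivAt_zero {f : ℝ → ℝ} {b : ℝ} (hb : 0 < b)
    (hc : ContinuousOn f (Set.Icc 0 b)) (hd : ∀ x ∈ Set.Ioo 0 b, HasDerivAt f 0 x) :
    f b = f 0 := by
  obtain ⟨c, -, h⟩ := exists_hasDerivAt_eq_slope f (fun _ => 0) hb hc hd
  have := (eq_div_iff (by linarith : b - 0 ≠ 0)).1 h
  linarith

lemma u_mem {t : ℝ} (h0 : 0 < t) (h1 : t < 1 / 2) : 0 < 4 * t * (1 - t) ∧ 4 * t * (1 - t) < 1 := by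
  constructor
  · have : 0 < 1 - t := by linarith
    positivity
  · nlinarith [mul_pos (sub_pos.2 h1) (sub_pos.2 h1)]

lemma u_deriv (t : ℝ) : HasDerivAt (fun t : ℝ => 4 * t * (1 - t)) (4 * (1 - 2 * t)) t := by
  have := ((hasDerivAt_id' t).const_mul 4).mul ((hasDerivAt_id' t).const_sub 1)
  refine this.congr_deriv ?_
  ring

lemma u_mapsTo {s : ℝ} (hs : s < 1 / 2) :
    Set.MapsTo (fun t : ℝ => 4 * t * (1 - t)) (Set.Icc 0 s) (Set.Icc 0 (4 * s * (1 - s))) := by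
  intro t ht
  obtain ⟨h0, h1⟩ := ht
  constructor
  · have : 0 ≤ 1 - t := by linarith
    positivity
  · have : 0 ≤ 1 - s - t := by linarith
    nlinarith [mul_nonneg (sub_nonneg.2 h1) this]

lemma bddP : PolyBdd (hc (1 / 4) (3 / 4)) := by apply hc_polyBdd <;> norm_num

lemma bddT : PolyBdd (hc (1 / 8) (3 / 8)) := by apply hc_polyBdd <;> norm_num

lemma one_le_ps {x : ℝ} (hx0 : 0 ≤ x) (hx : x < 1) : 1 ≤ ps (hc (1 / 4) (3 / 4)) x := by
  have h := (bddP.summable (x := x) (by rwa [abs_of_nonneg hx0])).le_tsum 0 fun n _ =>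
    mul_nonneg (hc_mem (by norm_num) (by norm_num) (by norm_num) (by norm_num) n).1
      (pow_nonneg hx0 n)
  simpa [hc_zero, ps] using h

/-- The two solutions have zero Wronskian: the expression is `t(1-t)` times the Wronskian of
`₂F₁(1/4,3/4;1;t)` and `₂F₁(1/8,3/8;1;4t(1-t))`. -/
lemma wronskian_zero {s : ℝ} (h0 : 0 < s) (h1 : s < 1 / 2) :
    ps (hc (1 / 4) (3 / 4)) s * ((1 - 2 * s) * ps (th (hc (1 / 8) (3 / 8))) (4 * s * (1 - s)))
      - ps (hc (1 / 8) (3 / 8)) (4 * s * (1 - s)) * ((1 - s) * ps (th (hc (1 / 4) (3 / 4))) s)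
      = 0 := by
  have hu := u_mem h0 h1
  have hcu : ContinuousOn (fun t : ℝ => 4 * t * (1 - t)) (Set.Icc 0 s) := by fun_prop
  have cP := bddP.continuousOn h0.le (by linarith : s < 1)
  have cP1 := bddP.th.continuousOn h0.le (by linarith : s < 1)
  have cT := (bddT.continuousOn hu.1.le hu.2).comp hcu (u_mapsTo h1)
  have cT1 := (bddT.th.continuousOn hu.1.le hu.2).comp hcu (u_mapsTo h1)
  have cl : ContinuousOn (fun t : ℝ => 1 - 2 * t) (Set.Icc 0 s) := by fun_prop
  have cl' : ContinuousOn (fun t : ℝ => 1 - t) (Set.Icc 0 s) := by fun_prop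
  have key := eq_of_hasDerivAt_zero
    (f := fun s => ps (hc (1 / 4) (3 / 4)) s *
        ((1 - 2 * s) * ps (th (hc (1 / 8) (3 / 8))) (4 * s * (1 - s)))
      - ps (hc (1 / 8) (3 / 8)) (4 * s * (1 - s)) * ((1 - s) * ps (th (hc (1 / 4) (3 / 4))) s))
    h0 ((cP.mul (cl.mul cT1)).sub (cT.mul (cl'.mul cP1))) ?_
  · rw [key]
    simp [ps_zero, th]
  intro t ht
  have ht1 : t < 1 / 2 := ht.2.trans h1
  have hu := u_mem ht.1 ht1
  have dP := bddP.hasDerivAt ht.1 (by linarith)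
  have dP1 := bddP.th.hasDerivAt ht.1 (by linarith)
  have dT := (bddT.hasDerivAt hu.1 hu.2).comp t (u_deriv t)
  have dT1 := (bddT.th.hasDerivAt hu.1 hu.2).comp t (u_deriv t)
  have dl := ((hasDerivAt_id' t).const_mul 2).const_sub 1
  have dl' := (hasDerivAt_id' t).const_sub 1
  refine ((dP.mul (dl.mul dT1)).sub (dT.mul (dl'.mul dP1))).congr_deriv ?_
  have oP := hc_ode bddP (x := t) (by rw [abs_of_pos ht.1]; linarith)
  have oT := hc_ode bddT (x := 4 * t * (1 - t)) (by rw [abs_of_pos hu.1]; exact hu.2)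
  simp only [Function.comp_apply, Pi.mul_apply]
  have htn : t ≠ 0 := ht.1.ne'
  have ht1n : 1 - t ≠ 0 := by linarith
  generalize ps (th (th (hc (1 / 4) (3 / 4)))) t = P2 at *
  generalize ps (th (hc (1 / 4) (3 / 4))) t = P1 at *
  generalize ps (hc (1 / 4) (3 / 4)) t = P at *
  generalize ps (th (th (hc (1 / 8) (3 / 8)))) (4 * t * (1 - t)) = T2 at *
  generalize ps (th (hc (1 / 8) (3 / 8))) (4 * t * (1 - t)) = T1 at *
  generalize ps (hc (1 / 8) (3 / 8)) (4 * t * (1 - t)) = T at *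
  have e1 : P2 = t * (P1 + 3 / 16 * P) / (1 - t) := by
    field_simp
    linear_combination 16 * oP
  have e2 : (1 - 2 * t) * (T2 * (1 - 2 * t)) = 4 * t * (1 - t) * (T1 / 2 + 3 / 64 * T) := by
    linear_combination oT
  have e3 : (1 - 2 * t) * (T2 / (4 * t * (1 - t)) * (4 * (1 - 2 * t)))
      = 4 * (T1 / 2 + 3 / 64 * T) := by
    field_simp
    linear_combination 128 * e2
  rw [e1]
  linear_combination (norm := (field_simp; ring)) P * e3

lemma quadratic_transformation {s : ℝ} (h0 : 0 < s) (h1 : s < 1 / 2) :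
    ps (hc (1 / 4) (3 / 4)) s = ps (hc (1 / 8) (3 / 8)) (4 * s * (1 - s)) := by
  have hu := u_mem h0 h1
  have hcu : ContinuousOn (fun t : ℝ => 4 * t * (1 - t)) (Set.Icc 0 s) := by fun_prop
  have cP := bddP.continuousOn h0.le (by linarith : s < 1)
  have cT := (bddT.continuousOn hu.1.le hu.2).comp hcu (u_mapsTo h1)
  have pos : ∀ t ∈ Set.Icc 0 s, ps (hc (1 / 4) (3 / 4)) t ≠ 0 := fun t ht => by
    have := one_le_ps ht.1 (by linarith [ht.2])
    linarith
  have key := eq_of_hasDerivAt_zero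
    (f := fun s => ps (hc (1 / 8) (3 / 8)) (4 * s * (1 - s)) / ps (hc (1 / 4) (3 / 4)) s)
    h0 (cT.div cP pos) ?_
  · simp only [mul_zero, zero_mul, ps_zero, hc_zero, div_one] at key
    exact ((div_eq_one_iff_eq (pos s ⟨h0.le, le_rfl⟩)).1 key).symm
  intro t ht
  have ht1 : t < 1 / 2 := ht.2.trans h1
  have hu := u_mem ht.1 ht1
  have dP := bddP.hasDerivAt ht.1 (by linarith)
  have dT := (bddT.hasDerivAt hu.1 hu.2).comp t (u_deriv t)
  have hp := pos t ⟨ht.1.le, ht.2.le⟩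
  refine (dT.div dP hp).congr_deriv ?_
  have hw := wronskian_zero ht.1 ht1
  have htn : t ≠ 0 := ht.1.ne'
  have ht1n : 1 - t ≠ 0 := by linarith
  simp only [Function.comp_apply]
  rw [div_eq_zero_iff]
  left
  field_simp
  linear_combination hw

/-! ### Clausen's formula -/

/-- The coefficients `(1/4)ₙ (1/2)ₙ (3/4)ₙ / n!³` of `₃F₂(1/4,1/2,3/4;1,1;x)`. -/
noncomputable def cc (n : ℕ) : ℝ :=
  poch (1 / 4) n * poch (1 / 2) n * poch (3 / 4) n / (n.factorial : ℝ) ^ 3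

lemma cc_zero : cc 0 = 1 := by simp [cc, poch_zero]

lemma cc_succ (n : ℕ) : ((n : ℝ) + 1) ^ 3 * cc (n + 1)
    = (1 / 4 + n) * (1 / 2 + n) * (3 / 4 + n) * cc n := by
  have h : (n.factorial : ℝ) ≠ 0 := by positivity
  simp only [cc, poch_succ, Nat.factorial_succ]
  push_cast
  field_simp

lemma cc_mem (n : ℕ) : 0 ≤ cc n ∧ cc n ≤ 1 / ((n : ℝ) + 1) := by
  induction n with
  | zero => simp [cc_zero]
  | succ n ih =>
    have h := cc_succ n
    have hn : (0 : ℝ) ≤ n := n.cast_nonneg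
    have hp : (0 : ℝ) < ((n : ℝ) + 1) ^ 3 := by positivity
    have hq : 0 ≤ (1 / 4 + (n : ℝ)) * (1 / 2 + n) * (3 / 4 + n) := by positivity
    rw [mul_comm, ← eq_div_iff hp.ne'] at h
    rw [h]
    refine ⟨div_nonneg (mul_nonneg hq ih.1) hp.le, ?_⟩
    have h2 := mul_le_mul_of_nonneg_left ih.2 hq
    refine (div_le_div_of_nonneg_right h2 hp.le).trans ?_
    push_cast
    rw [mul_one_div, div_div, div_le_div_iff₀ (by positivity) (by positivity)]
    have e : 1 * (((n : ℝ) + 1) * (n + 1) ^ 3)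
        - (1 / 4 + (n : ℝ)) * (1 / 2 + n) * (3 / 4 + n) * (n + 1 + 1)
        = (n : ℝ) ^ 3 / 2 + 37 / 16 * n ^ 2 + 81 / 32 * n + 13 / 16 := by ring
    have : 0 ≤ (n : ℝ) ^ 3 / 2 + 37 / 16 * n ^ 2 + 81 / 32 * n + 13 / 16 := by positivity
    linarith

/-- The operator `θ = X d/dX` on formal power series. -/
noncomputable def theta (f : PowerSeries ℝ) : PowerSeries ℝ :=
  PowerSeries.X * PowerSeries.derivative ℝ f

lemma coeff_theta (f : PowerSeries ℝ) (n : ℕ) :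
    PowerSeries.coeff n (theta f) = n * PowerSeries.coeff n f := by
  rcases n with _ | n
  · simp [theta]
  · rw [theta, PowerSeries.coeff_succ_X_mul, PowerSeries.coeff_derivative]
    push_cast
    ring

lemma theta_mul (f g : PowerSeries ℝ) : theta (f * g) = theta f * g + f * theta g := by
  simp only [theta, Derivation.leibniz, smul_eq_mul]
  ring

lemma theta_add (f g : PowerSeries ℝ) : theta (f + g) = theta f + theta g := by
  simp only [theta, map_add]
  ring

lemma theta_C (r : ℝ) : theta (PowerSeries.C r) = 0 := by
  ext n
  rw [coeff_theta]
  rcases n with _ | n <;> simp [PowerSeries.coeff_C]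

lemma theta_X : theta PowerSeries.X = PowerSeries.X := by
  simp [theta]

/-- The formal series of `₂F₁(1/8,3/8;1;X)`. -/
noncomputable def fser : PowerSeries ℝ := PowerSeries.mk (hc (1 / 8) (3 / 8))

lemma fser_ode : theta (theta fser) = PowerSeries.X * (theta (theta fser)
    + PowerSeries.C (1 / 2) * theta fser + PowerSeries.C (3 / 64) * fser) := by
  ext n
  rcases n with _ | n
  · simp [coeff_theta]
  · rw [PowerSeries.coeff_succ_X_mul]
    simp only [map_add, PowerSeries.coeff_C_mul, coeff_theta, fser, PowerSeries.coeff_mk]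
    have := hc_succ (1 / 8) (3 / 8) n
    push_cast
    linear_combination this

/-- The symmetric square of the hypergeometric equation:
`θ³g = X(θ + 1/4)(θ + 1/2)(θ + 3/4)g` for `g = f²`. -/
lemma sq_ode : theta (theta (theta (fser * fser))) = PowerSeries.X *
    (theta (theta (theta (fser * fser))) + PowerSeries.C (3 / 2) * theta (theta (fser * fser))
    + PowerSeries.C (11 / 16) * theta (fser * fser) + PowerSeries.C (3 / 32) * (fser * fser)) := by
  have h := fser_ode
  have hder := congrArg theta h
  simp only [theta_mul, theta_add, theta_C, theta_X] at hder ⊢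
  -- the rational constants are expressed through `C (1 / 64)` to make the identity polynomial
  have c1 : (PowerSeries.C (1 / 2) : PowerSeries ℝ) = 32 * PowerSeries.C (1 / 64) := by
    rw [show (32 : PowerSeries ℝ) = PowerSeries.C 32 from (map_ofNat _ _).symm, ← map_mul]
    norm_num
  have c2 : (PowerSeries.C (3 / 64) : PowerSeries ℝ) = 3 * PowerSeries.C (1 / 64) := by
    rw [show (3 : PowerSeries ℝ) = PowerSeries.C 3 from (map_ofNat _ _).symm, ← map_mul]
    norm_num
  have c3 : (PowerSeries.C (3 / 2) : PowerSeries ℝ) = 96 * PowerSeries.C (1 / 64) := by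
    rw [show (96 : PowerSeries ℝ) = PowerSeries.C 96 from (map_ofNat _ _).symm, ← map_mul]
    norm_num
  have c4 : (PowerSeries.C (11 / 16) : PowerSeries ℝ) = 44 * PowerSeries.C (1 / 64) := by
    rw [show (44 : PowerSeries ℝ) = PowerSeries.C 44 from (map_ofNat _ _).symm, ← map_mul]
    norm_num
  have c5 : (PowerSeries.C (3 / 32) : PowerSeries ℝ) = 6 * PowerSeries.C (1 / 64) := by
    rw [show (6 : PowerSeries ℝ) = PowerSeries.C 6 from (map_ofNat _ _).symm, ← map_mul]
    norm_num
  have c6 : (64 : PowerSeries ℝ) * PowerSeries.C (1 / 64) = 1 := by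
    rw [show (64 : PowerSeries ℝ) = PowerSeries.C 64 from (map_ofNat _ _).symm, ← map_mul]
    norm_num
  rw [c1, c2] at h hder
  rw [c3, c4, c5]
  generalize (PowerSeries.C (1 / 64) : PowerSeries ℝ) = k at *
  generalize theta (theta (theta fser)) = f3 at *
  generalize theta (theta fser) = f2 at *
  generalize theta fser = f1 at *
  generalize fser = f at *
  generalize (PowerSeries.X : PowerSeries ℝ) = X at *
  linear_combination 6 * f1 * h + 2 * f * hder - 2 * f * f2 * X * c6

lemma sq_coeff (n : ℕ) : PowerSeries.coeff n (fser * fser) = cc n := by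
  induction n with
  | zero => simp [fser, hc_zero, cc_zero]
  | succ n ih =>
    have h := congrArg (PowerSeries.coeff (n + 1)) sq_ode
    rw [PowerSeries.coeff_succ_X_mul] at h
    simp only [map_add, PowerSeries.coeff_C_mul, coeff_theta, ih] at h
    have hc := cc_succ n
    have hp : ((n : ℝ) + 1) ^ 3 ≠ 0 := by positivity
    apply mul_left_cancel₀ hp
    push_cast at h
    linear_combination h - hc

lemma clausen_square {x : ℝ} (hx : |x| < 1) :
    ps (hc (1 / 8) (3 / 8)) x ^ 2 = ps cc x := by
  have s : Summable fun n => ‖hc (1 / 8) (3 / 8) n * x ^ n‖ := bddT.summable_abs hx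
  have e := tsum_mul_tsum_eq_tsum_sum_antidiagonal_of_summable_norm s s
  rw [sq]
  refine e.trans (tsum_congr fun n => ?_)
  rw [← sq_coeff, PowerSeries.coeff_mul, Finset.sum_mul]
  refine Finset.sum_congr rfl fun p hp => ?_
  rw [← Finset.HasAntidiagonal.mem_antidiagonal.1 hp, pow_add]
  simp only [fser, PowerSeries.coeff_mk]
  ring

/-! ### Integration -/

/-- The coefficients `c n / n` of the primitive `Φ`; division by zero makes the constant term
vanish. -/
noncomputable def dd (n : ℕ) : ℝ := cc n / n

lemma dd_nonneg (n : ℕ) : 0 ≤ dd n := div_nonneg (cc_mem n).1 n.cast_nonneg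

lemma summable_dd : Summable dd := by
  refine Summable.of_nonneg_of_le dd_nonneg (fun n => ?_)
    (Real.summable_one_div_nat_pow.2 (by norm_num : 1 < 2))
  rcases n with _ | n
  · simp [dd]
  · have h := (cc_mem (n + 1)).2
    rw [dd, sq, ← div_div]
    refine div_le_div_of_nonneg_right (h.trans ?_) (Nat.cast_nonneg _)
    exact one_div_le_one_div_of_le (by positivity) (by linarith)

lemma dd_polyBdd : PolyBdd dd := by
  refine ⟨∑' n, dd n, 0, fun n => ?_⟩
  rw [abs_of_nonneg (dd_nonneg n)]
  simpa using summable_dd.le_tsum n fun m _ => dd_nonneg m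

lemma cc_polyBdd : PolyBdd cc := by
  refine ⟨1, 0, fun n => ?_⟩
  rw [abs_of_nonneg (cc_mem n).1]
  refine (cc_mem n).2.trans ?_
  rw [pow_zero, mul_one]
  exact (div_le_one (by positivity)).2 (by linarith [n.cast_nonneg (α := ℝ)])

lemma continuousOn_dd : ContinuousOn (ps dd) (Set.Icc 0 1) := by
  refine continuousOn_tsum (fun n => by fun_prop) summable_dd fun n x hx => ?_
  rw [Real.norm_eq_abs, abs_mul, abs_of_nonneg (dd_nonneg n), abs_of_nonneg (pow_nonneg hx.1 n)]
  exact mul_le_of_le_one_right (dd_nonneg n) (pow_le_one₀ hx.1 hx.2)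

lemma ps_th_dd {x : ℝ} (hx : |x| < 1) : ps (th dd) x = ps cc x - 1 := by
  rw [ps, dd_polyBdd.th.summable hx |>.tsum_eq_zero_add, ps,
    (cc_polyBdd.summable hx).tsum_eq_zero_add]
  simp only [th, dd, cc_zero, Nat.cast_zero, zero_mul, zero_add, pow_zero, mul_one,
    add_sub_cancel_left]
  refine tsum_congr fun n => ?_
  have : ((n + 1 : ℕ) : ℝ) ≠ 0 := by positivity
  field_simp

lemma F21_eq (t : ℝ) : F21 t = ps (hc (1 / 4) (3 / 4)) t := by
  refine tsum_congr fun n => ?_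
  rw [poch_one, hc]
  field_simp

lemma dd_succ (n : ℕ) : dd (n + 1) =
    3 / 32 * ((poch (5/4) n * poch (3/2) n * poch (7/4) n * poch 1 n * poch 1 n) /
      (poch 2 n * poch 2 n * poch 2 n * poch 2 n) / (n.factorial : ℝ)) := by
  have shift : ∀ (a : ℝ) (n : ℕ), poch a (n + 1) = a * poch (a + 1) n := by
    intro a n
    simp only [poch, Finset.prod_range_succ', Nat.cast_zero, add_zero, mul_comm a]
    congr 1
    refine Finset.prod_congr rfl fun i _ => ?_
    push_cast
    ring
  have h2 : poch 2 n = ((n + 1).factorial : ℝ) := by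
    rw [← poch_one, shift]
    norm_num
  rw [dd, cc, shift, shift, shift, poch_one, h2, Nat.factorial_succ]
  have h : (n.factorial : ℝ) ≠ 0 := by positivity
  push_cast
  norm_num
  field_simp
  ring

lemma ps_dd_eq {x : ℝ} (hx0 : 0 ≤ x) (hx1 : x ≤ 1) : ps dd x = 3 / 32 * x * F54 x := by
  have hs : Summable fun n => dd n * x ^ n :=
    Summable.of_nonneg_of_le (fun n => mul_nonneg (dd_nonneg n) (pow_nonneg hx0 n))
      (fun n => mul_le_of_le_one_right (dd_nonneg n) (pow_le_one₀ hx0 hx1)) summable_dd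
  rw [ps, hs.tsum_eq_zero_add, F54, ← tsum_mul_left]
  have : dd 0 = 0 := by simp [dd]
  rw [this, zero_mul, zero_add]
  refine tsum_congr fun n => ?_
  rw [dd_succ, pow_succ]
  ring

/-- Integration via Clausen's identity, valid for `w ∈ [0, 1/2]`. -/
theorem clausen_integral_identity (w : ℝ) (hw0 : 0 ≤ w) (hw1 : w ≤ 1/2) :
    (∫ t in (0:ℝ)..w, ((F21 t) ^ 2 - 1) * (1 - 2 * t) / (t * (1 - t))) =
    (3/8) * w * (1 - w) * F54 (4 * w * (1 - w)) := by
  have hmap : Set.MapsTo (fun t : ℝ => 4 * t * (1 - t)) (Set.Icc 0 w) (Set.Icc 0 1) := by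
    intro t ht
    have : 0 ≤ 1 - t := by linarith [ht.2]
    have := ht.1
    exact ⟨by positivity, by nlinarith [sq_nonneg (1 - 2 * t)]⟩
  have hcont : ContinuousOn (fun t : ℝ => ps dd (4 * t * (1 - t))) (Set.Icc 0 w) :=
    continuousOn_dd.comp (by fun_prop) hmap
  have hderiv : ∀ t ∈ Set.Ioo 0 w, HasDerivAt (fun t : ℝ => ps dd (4 * t * (1 - t)))
      (((F21 t) ^ 2 - 1) * (1 - 2 * t) / (t * (1 - t))) t := by
    intro t ht
    have ht1 : t < 1 / 2 := ht.2.trans_le hw1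
    have hu := u_mem ht.1 ht1
    have hua : |4 * t * (1 - t)| < 1 := by rw [abs_of_pos hu.1]; exact hu.2
    refine ((dd_polyBdd.hasDerivAt hu.1 hu.2).comp t (u_deriv t)).congr_deriv ?_
    rw [ps_th_dd hua, F21_eq, quadratic_transformation ht.1 ht1, clausen_square hua]
    have htn : t ≠ 0 := ht.1.ne'
    have ht1n : 1 - t ≠ 0 := by linarith
    field_simp
  have hnonneg : ∀ t ∈ Set.Ioo 0 w, 0 ≤ ((F21 t) ^ 2 - 1) * (1 - 2 * t) / (t * (1 - t)) := by
    intro t ht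
    have ht1 : t < 1 / 2 := ht.2.trans_le hw1
    have h1 : 1 ≤ F21 t := by
      rw [F21_eq]
      exact one_le_ps ht.1.le (by linarith)
    have h2 : 0 ≤ F21 t ^ 2 - 1 := by nlinarith
    have h3 : 0 ≤ 1 - 2 * t := by linarith
    have h4 : 0 ≤ 1 - t := by linarith
    have := ht.1
    positivity
  have hint : IntervalIntegrable
      (fun t : ℝ => ((F21 t) ^ 2 - 1) * (1 - 2 * t) / (t * (1 - t))) MeasureTheory.volume 0 w := by
    rw [intervalIntegrable_iff_integrableOn_Ioc_of_le hw0]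
    exact intervalIntegral.integrableOn_deriv_of_nonneg hcont hderiv hnonneg
  rw [intervalIntegral.integral_eq_sub_of_hasDerivAt_of_le hw0 hcont hderiv hint]
  obtain ⟨hu0, hu1⟩ := hmap ⟨hw0, le_rfl⟩
  have h0 : ps dd (4 * 0 * (1 - 0)) = 0 := by
    rw [mul_zero, zero_mul, ps_zero]
    simp [dd]
  rw [h0, ps_dd_eq hu0 hu1]
  ring
end

section
/- ∑_{n=1}^∞ (1/n)·(1/12)ⁿ·∑_{j=0}^n C(n,j)·(−4)^{n−j}·∑_{k=0}^j C(j,k)²·C(2k,k)·C(2j−2k,j−k) − log(3/4) = ∑_{n=1}^∞ (1/16)ⁿ·(1/n)·∑_{j=0}^n C(n,j)²·C(2j,j)·C(2n−2j,n−j). -/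
/-!
Both sides are moment series of one random variable. Let `x, y, z` be independent and uniform on
the unit circle, and put `W = ‖(1 + x) + (1 + y) z‖²`, which takes values in `[0, 16]`.
Orthogonality of characters gives `E ‖A + B z‖^(2n) = ∑ C(n,k)² ‖A‖^(2k) ‖B‖^(2(n-k))`
(`integral_norm_pow`). Applied to `z`, and then with `A = B = 1` to `x` and to `y`, it shows that
`E W^n` is the inner sum of the right-hand side, the `n`-th Domb number (`integral_W_pow`). With
`V = W/16` and `U = (W - 4)/12`, the right-hand series is therefore `∑ E V^n / n` and, by the
binomial theorem, the left-hand one is `∑ E U^n / n`.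

Where `W < 16` the logarithm series give
`∑ (U^n - V^n)/n = log (1 - V) - log (1 - U) = log (3/4)`, because `1 - V = (3/4)(1 - U)`.

Integrating termwise requires control at the boundary value `W = 16`. The bound
`C(2k,k) ≤ 4^k` and `∑ C(n,k)² = C(2n,n)` yield `E V^n ≤ C(2n,n)/4^n ≤ 1/√(2n+1)`
(`integral_pow_le`). Hence `W < 16` almost surely (`ae_W_lt`), the series `∑ E V^n / n`
converges, and so does `∑ E |U|^n / n`, as `|U|^n ≤ V^n + 3^(-n)`.
-/

open Real Finset

open MeasureTheory AddCircle Filter Topology ComplexConjugate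

/-- The character `t ↦ exp (2πit)` of the circle `ℝ/ℤ`. -/
noncomputable def chr (t : UnitAddCircle) : ℂ := fourier 1 t

lemma continuous_chr : Continuous chr := (fourier 1).continuous

lemma fourier_natCast_eq_chr_pow (m : ℕ) (t : UnitAddCircle) :
    fourier (m : ℤ) t = chr t ^ m := by
  induction m with
  | zero => simp
  | succ m ih => rw [pow_succ, ← ih, chr, ← fourier_add]; norm_cast

lemma norm_chr (t : UnitAddCircle) : ‖chr t‖ = 1 := by
  rw [chr, fourier_one]
  exact Circle.norm_coe _

lemma integral_fourier_haar (m : ℤ) :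
    ∫ t : UnitAddCircle, fourier m t ∂haarAddCircle = if m = 0 then 1 else 0 := by
  split_ifs with h
  · simp [h]
  · exact integral_eq_zero_of_add_right_eq_neg (μ := haarAddCircle)
      (fourier_add_half_inv_index h one_pos)

/-- Parseval's identity for the trigonometric polynomial `(A + B z) ^ n`. -/
lemma integral_norm_pow (A B : ℂ) (n : ℕ) :
    ∫ t : UnitAddCircle, (‖A + B * chr t‖ ^ 2) ^ n ∂haarAddCircle =
      ∑ k ∈ range (n + 1), (n.choose k : ℝ) ^ 2 * (‖A‖ ^ 2) ^ k * (‖B‖ ^ 2) ^ (n - k) := by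
  have expand : ∀ t : UnitAddCircle, (((‖A + B * chr t‖ ^ 2) ^ n : ℝ) : ℂ) =
      ∑ k ∈ range (n + 1), ∑ l ∈ range (n + 1),
        (A ^ k * B ^ (n - k) * n.choose k * (conj A ^ l * conj B ^ (n - l) * n.choose l)) *
          fourier ((l : ℤ) - k) t := by
    intro t
    have h1 : (((‖A + B * chr t‖ ^ 2) ^ n : ℝ) : ℂ) =
        (A + B * chr t) ^ n * (conj A + conj B * conj (chr t)) ^ n := by
      rw [← mul_pow, ← map_mul, ← map_add, Complex.mul_conj, Complex.normSq_eq_norm_sq]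
      push_cast; rfl
    rw [h1, add_pow, add_pow, sum_mul_sum]
    refine sum_congr rfl fun k hk => sum_congr rfl fun l hl => ?_
    have hk' : k ≤ n := by simpa [Nat.lt_succ_iff] using hk
    have hl' : l ≤ n := by simpa [Nat.lt_succ_iff] using hl
    have h2 : (fourier ((l : ℤ) - k) t : ℂ) = chr t ^ (n - k) * conj (chr t) ^ (n - l) := by
      rw [← map_pow, ← fourier_natCast_eq_chr_pow, ← fourier_natCast_eq_chr_pow, ← fourier_neg,
        ← fourier_add]
      congr 2
      omega
    rw [h2]; ring
  apply Complex.ofReal_injective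
  rw [← integral_complex_ofReal]
  simp_rw [expand]
  have hint : ∀ (c : ℂ) (m : ℤ), Integrable (fun t : UnitAddCircle => c * fourier m t)
      haarAddCircle := fun c m =>
    (by fun_prop : Continuous fun t : UnitAddCircle => c * fourier m t).integrable_of_hasCompactSupport
      (HasCompactSupport.of_compactSpace _)
  rw [integral_finsetSum _ fun k _ => integrable_finsetSum _ fun l _ => hint _ _]
  push_cast
  refine sum_congr rfl fun k hk => ?_
  rw [integral_finsetSum _ fun l _ => hint _ _]
  simp_rw [integral_const_mul, integral_fourier_haar, sub_eq_zero, Nat.cast_inj]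
  rw [sum_eq_single_of_mem k hk (by intro l _ h; simp [h])]
  simp only [if_true, ← Complex.mul_conj']
  ring

lemma integral_norm_one_add_pow (n : ℕ) :
    ∫ t : UnitAddCircle, (‖1 + chr t‖ ^ 2) ^ n ∂haarAddCircle = ((2 * n).choose n : ℝ) := by
  have h := integral_norm_pow 1 1 n
  simp only [one_mul, norm_one, one_pow, mul_one] at h
  rw [h, ← Nat.sum_range_choose_sq]
  push_cast; rfl

/-- The `n`-th Domb number `∑ₖ C(n,k)² C(2k,k) C(2n-2k,n-k)`, as a real number. -/
noncomputable def domb (n : ℕ) : ℝ :=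
  ∑ k ∈ range (n + 1), ((n.choose k : ℝ)) ^ 2 * ((2 * k).choose k : ℝ) *
    ((2 * n - 2 * k).choose (n - k) : ℝ)

/-- The three-dimensional torus `(ℝ/ℤ)³`. -/
abbrev Torus := UnitAddCircle × UnitAddCircle × UnitAddCircle

/-- The Haar probability measure on the torus. -/
noncomputable def haarTorus : Measure Torus :=
  haarAddCircle.prod (haarAddCircle.prod haarAddCircle)

instance : IsProbabilityMeasure haarTorus := by unfold haarTorus; infer_instance

/-- The squared modulus `‖1 + x + z + y z‖²` at the point of the torus with characters `x, y, z`.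
It has the law of `‖1 + x + y + z‖²`, the spectral variable of the diamond lattice. -/
noncomputable def W (p : Torus) : ℝ := ‖(1 + chr p.1) + (1 + chr p.2.1) * chr p.2.2‖ ^ 2

lemma continuous_W : Continuous W := by
  have := continuous_chr
  unfold W; fun_prop

lemma integrable_of_continuous {X : Type*} [TopologicalSpace X] [CompactSpace X]
    [MeasurableSpace X] [OpensMeasurableSpace X] {μ : Measure X} [IsFiniteMeasure μ]
    {f : X → ℝ} (hf : Continuous f) : Integrable f μ :=
  hf.integrable_of_hasCompactSupport (HasCompactSupport.of_compactSpace _)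

lemma W_nonneg (p : Torus) : 0 ≤ W p := by unfold W; positivity

lemma W_le (p : Torus) : W p ≤ 16 := by
  have h : ‖(1 + chr p.1) + (1 + chr p.2.1) * chr p.2.2‖ ≤ 4 := by
    have h1 := norm_add_le (1 + chr p.1) ((1 + chr p.2.1) * chr p.2.2)
    have h2 := norm_add_le 1 (chr p.1)
    have h3 := norm_add_le 1 (chr p.2.1)
    rw [norm_mul] at h1
    simp only [norm_chr, norm_one, mul_one] at h1 h2 h3
    linarith
  unfold W
  nlinarith [norm_nonneg ((1 + chr p.1) + (1 + chr p.2.1) * chr p.2.2)]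

lemma integral_W_pow (n : ℕ) : ∫ p, W p ^ n ∂haarTorus = domb n := by
  have hc := continuous_chr
  have hW := continuous_W
  unfold haarTorus
  rw [integral_prod _ (integrable_of_continuous (by fun_prop))]
  have inner : ∀ x : UnitAddCircle,
      ∫ q : UnitAddCircle × UnitAddCircle, W (x, q) ^ n ∂(haarAddCircle.prod haarAddCircle) =
        ∑ k ∈ range (n + 1), (n.choose k : ℝ) ^ 2 * (‖1 + chr x‖ ^ 2) ^ k *
          ((2 * (n - k)).choose (n - k) : ℝ) := by
    intro x
    rw [integral_prod _ (integrable_of_continuous (by fun_prop))]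
    simp only [W, integral_norm_pow]
    rw [integral_finsetSum _ fun k _ => integrable_of_continuous (by fun_prop)]
    refine sum_congr rfl fun k _ => ?_
    rw [integral_const_mul, integral_norm_one_add_pow]
  simp_rw [inner]
  rw [integral_finsetSum _ fun k _ => integrable_of_continuous (by fun_prop)]
  refine sum_congr rfl fun k _ => ?_
  rw [integral_mul_const, integral_const_mul, integral_norm_one_add_pow, Nat.mul_sub]

/-- An explicit form of the decay `C(2n,n)/4^n = O(n^(-1/2))`. -/
lemma centralBinom_sq_mul_le (n : ℕ) : (n.centralBinom : ℝ) ^ 2 * (2 * n + 1) ≤ 16 ^ n := by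
  induction n with
  | zero => simp
  | succ n ih =>
    have h : ((n : ℝ) + 1) * (n + 1).centralBinom = 2 * (2 * n + 1) * n.centralBinom := by
      exact_mod_cast Nat.succ_mul_centralBinom_succ n
    have hn : (0 : ℝ) < (n + 1) ^ 2 := by positivity
    refine le_of_mul_le_mul_left ?_ hn
    have h2 : ((n : ℝ) + 1) ^ 2 * ((((n + 1).centralBinom : ℕ) : ℝ) ^ 2 * (2 * (n + 1 : ℕ) + 1)) =
        4 * (2 * n + 1) * (2 * n + 3) * ((n.centralBinom : ℝ) ^ 2 * (2 * n + 1)) := by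
      push_cast
      linear_combination (2 * (n : ℝ) + 3) * (((n : ℝ) + 1) * (n + 1).centralBinom +
        2 * (2 * n + 1) * n.centralBinom) * h
    rw [h2]
    calc _ ≤ 4 * (2 * (n : ℝ) + 1) * (2 * n + 3) * 16 ^ n := by gcongr
      _ ≤ (16 * (n + 1) ^ 2) * 16 ^ n := by
        refine mul_le_mul_of_nonneg_right ?_ (by positivity)
        nlinarith
      _ = _ := by ring

lemma domb_nonneg (n : ℕ) : 0 ≤ domb n := by unfold domb; positivity

lemma domb_le (n : ℕ) : domb n ≤ 4 ^ n * n.centralBinom := by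
  have hcb (m : ℕ) : ((2 * m).choose m : ℝ) ≤ 4 ^ m := by
    have := Nat.choose_le_two_pow (2 * m) m
    rw [pow_mul] at this
    exact_mod_cast this
  rw [Nat.centralBinom, ← Nat.sum_range_choose_sq]
  push_cast
  rw [mul_sum, domb]
  refine sum_le_sum fun k hk => ?_
  have hk' : k ≤ n := by simpa [Nat.lt_succ_iff] using hk
  calc _ ≤ (n.choose k : ℝ) ^ 2 * 4 ^ k * 4 ^ (n - k) := by
        gcongr
        · exact hcb k
        · rw [← Nat.mul_sub]; exact hcb _
    _ = _ := by rw [mul_assoc, ← pow_add, Nat.add_sub_cancel' hk', mul_comm]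

lemma integral_pow_le (n : ℕ) :
    ∫ p, (W p / 16) ^ n ∂haarTorus ≤ 1 / √(2 * n + 1) := by
  simp_rw [div_pow]
  rw [integral_div, integral_W_pow, div_le_div_iff₀ (by positivity) (by positivity), one_mul]
  have h1 := domb_le n
  have h2 : (n.centralBinom : ℝ) * √(2 * n + 1) ≤ 4 ^ n := by
    refine le_of_sq_le_sq ?_ (by positivity)
    rw [mul_pow, Real.sq_sqrt (by positivity), ← pow_mul, mul_comm n 2, pow_mul]
    norm_num
    exact centralBinom_sq_mul_le n
  calc _ ≤ 4 ^ n * n.centralBinom * √(2 * n + 1) := by gcongr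
    _ ≤ 4 ^ n * 4 ^ n := by rw [mul_assoc]; gcongr
    _ = _ := by rw [← mul_pow]; norm_num

lemma summable_moments :
    Summable fun n : ℕ => (∫ p, (W p / 16) ^ (n + 1) ∂haarTorus) / ((n : ℝ) + 1) := by
  have hs : Summable fun n : ℕ => 1 / ((n + 1 : ℕ) : ℝ) ^ (3 / 2 : ℝ) :=
    (summable_nat_add_iff 1).2 (Real.summable_one_div_nat_rpow.2 (by norm_num))
  refine Summable.of_nonneg_of_le (fun n => ?_) (fun n => ?_) hs
  · exact div_nonneg (integral_nonneg fun p => by have := W_nonneg p; positivity) (by positivity)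
  · have h := integral_pow_le (n + 1)
    have hx : (0 : ℝ) < (n : ℝ) + 1 := by positivity
    have h3 : (((n + 1 : ℕ) : ℝ)) ^ (3 / 2 : ℝ) = √((n : ℝ) + 1) * (n + 1) := by
      push_cast
      rw [Real.sqrt_eq_rpow, ← Real.rpow_add_one hx.ne']; norm_num
    rw [h3, ← div_div]
    gcongr
    refine h.trans ?_
    push_cast
    gcongr
    linarith

/-- The event `W = 16` has probability at most `E (W/16)^n` for every `n`, and these moments tend
to `0`. -/
lemma ae_W_lt : ∀ᵐ p ∂haarTorus, W p < 16 := by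
  have hm : MeasurableSet {p | W p = 16} := continuous_W.measurable (measurableSet_singleton 16)
  have hle (n : ℕ) : haarTorus.real {p | W p = 16} ≤ 1 / √(2 * n + 1) := by
    refine le_trans ?_ (integral_pow_le n)
    rw [← integral_indicator_one hm]
    have hW := continuous_W
    refine integral_mono ((integrable_const (1 : ℝ)).indicator hm)
      (integrable_of_continuous (by fun_prop)) fun p => ?_
    by_cases hp : W p = 16
    · simp [Set.indicator, hp]
    · have := W_nonneg p
      simp only [Set.indicator, Set.mem_ofPred_eq, hp, if_false]; positivity
  have hlim : Tendsto (fun n : ℕ => 1 / √(2 * (n : ℝ) + 1)) atTop (𝓝 0) := by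
    simp_rw [one_div]
    refine tendsto_inv_atTop_zero.comp (Real.tendsto_sqrt_atTop.comp ?_)
    exact tendsto_atTop_add_const_right _ _
      (tendsto_natCast_atTop_atTop.const_mul_atTop (by norm_num))
  have h0 : haarTorus.real {p | W p = 16} = 0 :=
    le_antisymm (ge_of_tendsto' hlim hle) measureReal_nonneg
  rw [measureReal_eq_zero_iff] at h0
  filter_upwards [measure_eq_zero_iff_ae_notMem.1 h0] with p hp
  exact lt_of_le_of_ne (W_le p) hp

lemma integral_sub_four_pow (n : ℕ) :
    ∫ p, (W p - 4) ^ n ∂haarTorus =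
      ∑ j ∈ range (n + 1), (n.choose j : ℝ) * (-4 : ℝ) ^ (n - j) * domb j := by
  have hW := continuous_W
  simp_rw [sub_eq_add_neg, add_pow]
  rw [integral_finsetSum _ fun k _ => integrable_of_continuous (by fun_prop)]
  refine sum_congr rfl fun j _ => ?_
  rw [integral_mul_const, integral_mul_const, integral_W_pow]
  ring

/-- If `W ≥ 4` then `0 ≤ (W - 4)/12 ≤ W/16`; otherwise `|(W - 4)/12| ≤ 1/3`. -/
lemma abs_pow_le (p : Torus) (n : ℕ) :
    |(W p - 4) / 12| ^ n ≤ (W p / 16) ^ n + (1 / 3) ^ n := by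
  have h0 := W_nonneg p
  have h16 := W_le p
  rcases le_total 4 (W p) with h | h
  · have : |(W p - 4) / 12| ≤ W p / 16 := by
      rw [abs_of_nonneg (by linarith)]; linarith
    calc _ ≤ (W p / 16) ^ n := by gcongr
      _ ≤ _ := le_add_of_nonneg_right (by positivity)
  · have : |(W p - 4) / 12| ≤ 1 / 3 := by
      rw [abs_of_nonpos (by linarith)]; linarith
    calc _ ≤ (1 / 3 : ℝ) ^ n := by gcongr
      _ ≤ _ := le_add_of_nonneg_left (by positivity)

lemma summable_abs_moments : Summable fun n : ℕ =>
    (∫ p, |(W p - 4) / 12| ^ (n + 1) ∂haarTorus) / ((n : ℝ) + 1) := by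
  have hW := continuous_W
  have hg : Summable fun n : ℕ => (1 / 3 : ℝ) ^ (n + 1) :=
    (summable_nat_add_iff 1).2 (summable_geometric_of_lt_one (by norm_num) (by norm_num))
  refine Summable.of_nonneg_of_le (fun n => ?_) (fun n => ?_) (summable_moments.add hg)
  · exact div_nonneg (integral_nonneg fun p => by positivity) (by positivity)
  · have h1 : ∫ p, |(W p - 4) / 12| ^ (n + 1) ∂haarTorus ≤
        (∫ p, (W p / 16) ^ (n + 1) ∂haarTorus) + (1 / 3) ^ (n + 1) := by
      calc _ ≤ ∫ p, ((W p / 16) ^ (n + 1) + (1 / 3) ^ (n + 1)) ∂haarTorus :=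
            integral_mono (integrable_of_continuous (by fun_prop))
              (integrable_of_continuous (by fun_prop)) fun p => abs_pow_le p (n + 1)
        _ = _ := by
          rw [integral_add (integrable_of_continuous (by fun_prop)) (integrable_const _)]
          simp
    have h2 : (1 / 3 : ℝ) ^ (n + 1) / ((n : ℝ) + 1) ≤ (1 / 3) ^ (n + 1) :=
      div_le_self (by positivity) (by linarith [(Nat.cast_nonneg n : (0 : ℝ) ≤ n)])
    calc _ ≤ ((∫ p, (W p / 16) ^ (n + 1) ∂haarTorus) + (1 / 3) ^ (n + 1)) / ((n : ℝ) + 1) := by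
          gcongr
      _ ≤ _ := by rw [add_div]; gcongr

lemma ae_tsum_eq : ∀ᵐ p ∂haarTorus,
    ∑' n : ℕ, (((W p - 4) / 12) ^ (n + 1) / ((n : ℝ) + 1) -
      (W p / 16) ^ (n + 1) / ((n : ℝ) + 1)) = Real.log (3 / 4) := by
  filter_upwards [ae_W_lt] with p hp
  have h0 := W_nonneg p
  have hU := hasSum_pow_div_log_of_abs_lt_one (x := (W p - 4) / 12)
    (abs_lt.2 ⟨by linarith, by linarith⟩)
  have hV := hasSum_pow_div_log_of_abs_lt_one (x := W p / 16)
    (abs_lt.2 ⟨by linarith, by linarith⟩)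
  rw [(hU.sub hV).tsum_eq]
  have h : 1 - W p / 16 = 3 / 4 * (1 - (W p - 4) / 12) := by ring
  rw [h, Real.log_mul (by norm_num) (by linarith)]
  ring

/-- Equality of lattice sums expressing `λ_diamond = λ_fcc/2`. -/
theorem diamond_fcc_lattice_sum_identity :
    (∑' n : ℕ, (1 / ((n : ℝ) + 1)) * (1/12 : ℝ) ^ (n + 1) *
        ∑ j ∈ Finset.range (n + 2), ((n + 1).choose j : ℝ) * (-4 : ℝ) ^ (n + 1 - j) *
          ∑ k ∈ Finset.range (j + 1),
            ((j.choose k : ℝ)) ^ 2 * ((2 * k).choose k : ℝ) *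
              ((2 * j - 2 * k).choose (j - k) : ℝ)) -
      Real.log (3/4) =
    ∑' n : ℕ, (1/16 : ℝ) ^ (n + 1) * (1 / ((n : ℝ) + 1)) *
      ∑ j ∈ Finset.range (n + 2),
        (((n + 1).choose j : ℝ)) ^ 2 * ((2 * j).choose j : ℝ) *
          ((2 * (n + 1) - 2 * j).choose (n + 1 - j) : ℝ) := by
  have hW := continuous_W
  have hl (n : ℕ) : (1 / ((n : ℝ) + 1)) * (1/12 : ℝ) ^ (n + 1) *
        ∑ j ∈ Finset.range (n + 2), ((n + 1).choose j : ℝ) * (-4 : ℝ) ^ (n + 1 - j) *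
          ∑ k ∈ Finset.range (j + 1),
            ((j.choose k : ℝ)) ^ 2 * ((2 * k).choose k : ℝ) *
              ((2 * j - 2 * k).choose (j - k) : ℝ) =
      ∫ p, ((W p - 4) / 12) ^ (n + 1) / ((n : ℝ) + 1) ∂haarTorus := by
    simp_rw [div_pow]
    rw [integral_div, integral_div, integral_sub_four_pow]
    simp only [domb]
    ring
  have hr (n : ℕ) : (1/16 : ℝ) ^ (n + 1) * (1 / ((n : ℝ) + 1)) *
      ∑ j ∈ Finset.range (n + 2),
        (((n + 1).choose j : ℝ)) ^ 2 * ((2 * j).choose j : ℝ) *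
          ((2 * (n + 1) - 2 * j).choose (n + 1 - j) : ℝ) =
      ∫ p, (W p / 16) ^ (n + 1) / ((n : ℝ) + 1) ∂haarTorus := by
    simp_rw [div_pow]
    rw [integral_div, integral_div, integral_W_pow]
    simp only [domb]
    ring
  simp_rw [hl, hr]
  have hiU (n : ℕ) : Integrable (fun p => ((W p - 4) / 12) ^ (n + 1) / ((n : ℝ) + 1)) haarTorus :=
    integrable_of_continuous (by fun_prop)
  have hiV (n : ℕ) : Integrable (fun p => (W p / 16) ^ (n + 1) / ((n : ℝ) + 1)) haarTorus :=
    integrable_of_continuous (by fun_prop)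
  have hnU : Summable fun n : ℕ =>
      ∫ p, ‖((W p - 4) / 12) ^ (n + 1) / ((n : ℝ) + 1)‖ ∂haarTorus := by
    refine summable_abs_moments.congr fun n => ?_
    rw [← integral_div]
    refine integral_congr_ae (.of_forall fun p => ?_)
    have : (0 : ℝ) ≤ (n : ℝ) + 1 := by positivity
    simp [abs_div, abs_of_nonneg this]
  have hnV : Summable fun n : ℕ =>
      ∫ p, ‖(W p / 16) ^ (n + 1) / ((n : ℝ) + 1)‖ ∂haarTorus := by
    refine summable_moments.congr fun n => ?_
    rw [← integral_div]
    refine integral_congr_ae (.of_forall fun p => ?_)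
    have := W_nonneg p
    exact (Real.norm_of_nonneg (by positivity)).symm
  have hsU := (hasSum_integral_of_summable_integral_norm hiU hnU).summable
  have hsV := (hasSum_integral_of_summable_integral_norm hiV hnV).summable
  -- Integrating the difference of the two series avoids integrability of `log (1 - W/16)`: its
  -- sum is almost everywhere constant.
  have hdiff := hasSum_integral_of_summable_integral_norm (μ := haarTorus)
    (F := fun (n : ℕ) p => ((W p - 4) / 12) ^ (n + 1) / ((n : ℝ) + 1) -
      (W p / 16) ^ (n + 1) / ((n : ℝ) + 1)) (fun n => (hiU n).sub (hiV n)) (by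
      refine Summable.of_nonneg_of_le (fun n => integral_nonneg fun p => norm_nonneg _)
        (fun n => ?_) (hnU.add hnV)
      rw [← integral_add (hiU n).norm (hiV n).norm]
      exact integral_mono ((hiU n).sub (hiV n)).norm ((hiU n).norm.add (hiV n).norm)
        fun p => norm_sub_le _ _)
  rw [integral_congr_ae ae_tsum_eq] at hdiff
  have h1 := hdiff.tsum_eq
  simp_rw [fun n => integral_sub (hiU n) (hiV n)] at h1
  rw [hsU.tsum_sub hsV] at h1
  simp at h1
  linarith
end
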